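/- Let m, n be positive integers, A ∈ M_{n,m}(𝔽_q((z⁻¹))), and s, t positive integers. Suppose that M(y) = ⟨Aᵀy⟩ ≥ q^{−t} for every nonzero polynomial vector y ∈ 𝔽_q[z]ⁿ of norm ‖y‖ ≤ q^s. Then for every θ = (θ_1, …, θ_n) ∈ 𝔽_q((z⁻¹))ⁿ there exists a polynomial vector x ∈ 𝔽_q[z]^m with ‖x‖ ≤ q^t such that max_{1≤i≤n} ⟨L_i(x) − θ_i⟩ ≤ q^{−s}. -/

import Mathlib

/-!
Common setup: the field `𝔽_q((z⁻¹))` of formal power series over a finite field `K` of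
cardinality `q`, modeled as the field `FF K` of formal Laurent series in `t = z⁻¹`,
together with its non-Archimedean norm, the embedding of the polynomial ring `𝔽_q[z]`,
distances to polynomial (vectors), Diophantine exponents, `Bad` sets, continued fractions
and best approximation sequences.
-/

open scoped Classical ENNReal NNReal
open Filter

noncomputable section

namespace FPSDA

variable (K : Type*) [Field K] [Fintype K]

/-- The field `𝔽_q((z⁻¹))` of formal power series in `z⁻¹` over the finite field `K = 𝔽_q`,
modeled as the field of formal Laurent series in the variable `t = z⁻¹`. -/
def FF : Type _ := LaurentSeries K

instance : Field (FF K) := inferInstanceAs (Field (LaurentSeries K))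

variable {K}

/-- The identity map, viewing an element of `𝔽_q((z⁻¹))` as a Laurent series in `t = z⁻¹`. -/
def toL (x : FF K) : LaurentSeries K := x

@[simp] lemma toL_zero : toL (0 : FF K) = 0 := rfl
@[simp] lemma toL_add (x y : FF K) : toL (x + y) = toL x + toL y := rfl
@[simp] lemma toL_neg (x : FF K) : toL (-x) = -toL x := rfl
@[simp] lemma toL_sub (x y : FF K) : toL (x - y) = toL x - toL y := rfl
lemma toL_eq_zero {x : FF K} : toL x = 0 ↔ x = 0 := Iff.rfl

/-- The norm `‖x‖ = q ^ (deg x)` on `𝔽_q((z⁻¹))`, where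
`deg x = - (order of x as a Laurent series in z⁻¹)`; `‖0‖ = 0`. -/
def fnorm (x : FF K) : ℝ :=
  if toL x = 0 then 0 else (Fintype.card K : ℝ) ^ (-(toL x).order)

lemma one_le_q : (1 : ℝ) ≤ (Fintype.card K : ℝ) := by
  exact_mod_cast Fintype.card_pos

lemma fnorm_nonneg (x : FF K) : 0 ≤ fnorm x := by
  unfold fnorm
  split_ifs
  · exact le_refl 0
  · exact zpow_nonneg (by positivity) _

lemma fnorm_eq_zero {x : FF K} : fnorm x = 0 ↔ x = 0 := by
  unfold fnorm
  split_ifs with h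
  · exact ⟨fun _ => toL_eq_zero.mp h, fun _ => rfl⟩
  · constructor
    · intro hc
      exact absurd hc (zpow_ne_zero _ (by
        have h0 : (0:ℝ) < (Fintype.card K : ℝ) := by positivity
        exact ne_of_gt h0))
    · intro hc
      exact absurd (toL_eq_zero.mpr hc) h

lemma fnorm_neg (x : FF K) : fnorm (-x) = fnorm x := by
  unfold fnorm
  rw [toL_neg]
  simp [neg_eq_zero, HahnSeries.order_neg]

lemma fnorm_add_le (x y : FF K) : fnorm (x + y) ≤ max (fnorm x) (fnorm y) := by
  by_cases hxy : x + y = 0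
  · rw [fnorm_eq_zero.mpr hxy]
    exact le_max_of_le_left (fnorm_nonneg x)
  by_cases hx : x = 0
  · rw [hx, zero_add]
    exact le_max_right _ _
  by_cases hy : y = 0
  · rw [hy, add_zero]
    exact le_max_left _ _
  have horder : min (toL x).order (toL y).order ≤ (toL (x + y)).order := by
    rw [toL_add]
    exact HahnSeries.min_order_le_order_add (show toL x + toL y ≠ 0 from hxy)
  have h1 : fnorm (x + y) = (Fintype.card K : ℝ) ^ (-(toL (x+y)).order) := by
    unfold fnorm
    rw [if_neg (show toL (x + y) ≠ 0 from hxy)]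
  rcases le_total (toL x).order (toL y).order with h | h
  · have h2 : (toL x).order ≤ (toL (x+y)).order := le_trans (by simp [min_eq_left h]) horder
    refine le_max_of_le_left ?_
    rw [h1]
    unfold fnorm
    rw [if_neg (show toL x ≠ 0 from hx)]
    exact zpow_le_zpow_right₀ one_le_q (by omega)
  · have h2 : (toL y).order ≤ (toL (x+y)).order := le_trans (by simp [min_eq_right h]) horder
    refine le_max_of_le_right ?_
    rw [h1]
    unfold fnorm
    rw [if_neg (show toL y ≠ 0 from hy)]
    exact zpow_le_zpow_right₀ one_le_q (by omega)

/-- The (ultra)metric `dist x y = ‖x - y‖` on `𝔽_q((z⁻¹))`. -/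
instance : MetricSpace (FF K) where
  dist x y := fnorm (x - y)
  dist_self x := by
    show fnorm (x - x) = 0
    rw [sub_self]
    exact fnorm_eq_zero.mpr rfl
  dist_comm x y := by
    show fnorm (x - y) = fnorm (y - x)
    have h : x - y = -(y - x) := by ring
    rw [h, fnorm_neg]
  dist_triangle x y z := by
    show fnorm (x - z) ≤ fnorm (x - y) + fnorm (y - z)
    have h : x - z = (x - y) + (y - z) := by ring
    calc fnorm (x - z) ≤ max (fnorm (x - y)) (fnorm (y - z)) := by
          rw [h]; exact fnorm_add_le _ _
      _ ≤ fnorm (x - y) + fnorm (y - z) :=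
        max_le (le_add_of_nonneg_right (fnorm_nonneg _)) (le_add_of_nonneg_left (fnorm_nonneg _))
  eq_of_dist_eq_zero := by
    intro x y h
    have h' : x - y = 0 := fnorm_eq_zero.mp h
    exact sub_eq_zero.mp h'

instance : MeasurableSpace (FF K) := borel _
instance : BorelSpace (FF K) := ⟨rfl⟩

/-- The canonical embedding of the polynomial ring `𝔽_q[z]` into `𝔽_q((z⁻¹))`:
the variable `z` is sent to `t⁻¹ = single (-1) 1`. -/
def polyF (P : Polynomial K) : FF K :=
  Polynomial.aeval (HahnSeries.single (-1 : ℤ) (1 : K)) P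

/-- Supremum norm of a vector with entries in `𝔽_q((z⁻¹))`. -/
def vnorm {ι : Type*} [Fintype ι] (v : ι → FF K) : ℝ := ⨆ i, fnorm (v i)

/-- `⟨v⟩`, the distance from the vector `v` to the nearest polynomial vector. -/
def vdist {ι : Type*} [Fintype ι] (v : ι → FF K) : ℝ :=
  ⨅ y : ι → Polynomial K, vnorm (fun i => v i - polyF (y i))

/-- `⟨x⟩`, the distance from the scalar `x` to the nearest polynomial. -/
def sdist (x : FF K) : ℝ := ⨅ y : Polynomial K, fnorm (x - polyF y)

/-- The fractional part `{x} = Σ_{i ≥ 1} a_i z^{-i}` of `x = Σ_i a_i z^{-i}`. -/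
def fracPart (x : FF K) : FF K :=
  (⟨fun i => if 1 ≤ i then (toL x).coeff i else 0, (toL x).isPWO_support'.mono (by
      intro i hi
      by_cases h : (1:ℤ) ≤ i
      · simpa [Function.mem_support, h] using hi
      · simp [Function.mem_support, h] at hi)⟩ : LaurentSeries K)

/-- The integer part `[x] = Σ_{i ≤ 0} a_i z^{-i}` of `x = Σ_i a_i z^{-i}`, as a polynomial
in `z`. -/
def intPoly (x : FF K) : Polynomial K :=
  ∑ i ∈ Finset.range ((-(toL x).order).toNat + 1),
    Polynomial.monomial i ((toL x).coeff (-(i : ℤ)))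

/-- `x ∈ 𝔽_q((z⁻¹))` is irrational if it is not in `𝔽_q(z)`, i.e. is not a ratio of two
polynomials in `z`. -/
def FIrrational (x : FF K) : Prop :=
  ∀ P Q : Polynomial K, Q ≠ 0 → x * polyF Q ≠ polyF P

section Exponents

variable {m n : ℕ}

/-- The norm `‖x‖ = max_j ‖x_j‖` of a polynomial vector `x`. -/
def pnorm {ι : Type*} [Fintype ι] (x : ι → Polynomial K) : ℝ :=
  vnorm (fun i => (polyF (x i) : FF K))

/-- The system `⟨A x - θ⟩ ≤ H^{-ω}`, `‖x‖ ≤ H` has a polynomial solution `x`. -/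
def Solv (A : Matrix (Fin n) (Fin m) (FF K)) (θ : Fin n → FF K) (ω H : ℝ) : Prop :=
  ∃ x : Fin m → Polynomial K,
    vdist (A.mulVec (fun j => polyF (x j)) - θ) ≤ H ^ (-ω) ∧ pnorm x ≤ H

/-- The system `⟨A x⟩ ≤ H^{-ω}`, `‖x‖ ≤ H` has a nonzero polynomial solution `x`. -/
def SolvHom (A : Matrix (Fin n) (Fin m) (FF K)) (ω H : ℝ) : Prop :=
  ∃ x : Fin m → Polynomial K, x ≠ 0 ∧
    vdist (A.mulVec (fun j => polyF (x j))) ≤ H ^ (-ω) ∧ pnorm x ≤ H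

/-- The inhomogeneous exponent `ω(A, θ)`: the supremum (in `[0,∞]`) of all `ω` such that
for arbitrarily large `H` the system `⟨A x - θ⟩ ≤ H^{-ω}`, `‖x‖ ≤ H` has a polynomial
solution. -/
def omegaInhom (A : Matrix (Fin n) (Fin m) (FF K)) (θ : Fin n → FF K) : ℝ≥0∞ :=
  ⨆ (ω : ℝ) (_ : ∀ H₀ : ℝ, ∃ H : ℝ, H₀ ≤ H ∧ Solv A θ ω H), ENNReal.ofReal ω

/-- The uniform inhomogeneous exponent `ω̂(A, θ)`: as `ω(A, θ)`, but with a solution for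
all sufficiently large `H`. -/
def omegaHatInhom (A : Matrix (Fin n) (Fin m) (FF K)) (θ : Fin n → FF K) : ℝ≥0∞ :=
  ⨆ (ω : ℝ) (_ : ∃ H₀ : ℝ, ∀ H : ℝ, H₀ ≤ H → Solv A θ ω H), ENNReal.ofReal ω

/-- The homogeneous exponent `ω(A)`. -/
def omegaHom (A : Matrix (Fin n) (Fin m) (FF K)) : ℝ≥0∞ :=
  ⨆ (ω : ℝ) (_ : ∀ H₀ : ℝ, ∃ H : ℝ, H₀ ≤ H ∧ SolvHom A ω H), ENNReal.ofReal ω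

/-- The uniform homogeneous exponent `ω̂(A)`. -/
def omegaHatHom (A : Matrix (Fin n) (Fin m) (FF K)) : ℝ≥0∞ :=
  ⨆ (ω : ℝ) (_ : ∃ H₀ : ℝ, ∀ H : ℝ, H₀ ≤ H → SolvHom A ω H), ENNReal.ofReal ω

/-- `A` is non-degenerate: the `𝔽_q[z]`-module `Aᵀ 𝔽_q[z]ⁿ + 𝔽_q[z]^m ⊆ 𝔽_q((z⁻¹))^m` has
rank `m + n` over `𝔽_q[z]`, i.e. its `m + n` natural generators are linearly independent
over `𝔽_q[z]`; equivalently, no nonzero polynomial vector `u` makes `Aᵀ u` a polynomial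
vector. -/
def Nondegenerate (A : Matrix (Fin n) (Fin m) (FF K)) : Prop :=
  ∀ u : Fin n → Polynomial K,
    (∃ v : Fin m → Polynomial K,
      A.transpose.mulVec (fun i => polyF (u i)) = fun j => polyF (v j)) → u = 0

/-- `liminf_{x ∈ 𝔽_q[z]^m, ‖x‖ → ∞} ‖x‖^{m/n} ⟨A x - θ⟩`, computed in `[0, ∞]`. -/
def badLiminf (A : Matrix (Fin n) (Fin m) (FF K)) (θ : Fin n → FF K) : ℝ≥0∞ :=
  Filter.liminf
    (fun x : Fin m → Polynomial K =>
      ENNReal.ofReal ((pnorm x) ^ ((m : ℝ) / (n : ℝ)) *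
        vdist (A.mulVec (fun j => polyF (x j)) - θ)))
    (Filter.comap (fun x : Fin m → Polynomial K => pnorm x) Filter.atTop)

/-- The set `Bad^ε(A)` of `θ` in the unit polydisc `𝕀ⁿ` with
`liminf_{‖x‖ → ∞} ‖x‖^{m/n} ⟨A x - θ⟩ ≥ ε`. -/
def Bad (A : Matrix (Fin n) (Fin m) (FF K)) (ε : ℝ) : Set (Fin n → FF K) :=
  {θ | (∀ i, fnorm (θ i) < 1) ∧ ENNReal.ofReal ε ≤ badLiminf A θ}

/-- The set `Bad(A) = ⋃_{ε > 0} Bad^ε(A)`. -/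
def BadAll (A : Matrix (Fin n) (Fin m) (FF K)) : Set (Fin n → FF K) :=
  ⋃ (ε : ℝ) (_ : 0 < ε), Bad A ε

/-- `M(y) = ⟨Aᵀ y⟩` for a polynomial vector `y`. -/
def Mfun (A : Matrix (Fin n) (Fin m) (FF K)) (y : Fin n → Polynomial K) : ℝ :=
  vdist (A.transpose.mulVec (fun i => polyF (y i)))

/-- `y 1, y 2, …` is a sequence of best approximations related to `Aᵀ`:
`1 = Y_1 < Y_2 < ⋯`, `M_1 > M_2 > ⋯`, and `M(x) ≥ M_k` for every nonzero polynomial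
vector `x` with `‖x‖ < Y_{k+1}` (the value `y 0` is irrelevant). -/
def IsBestApproxSeq (A : Matrix (Fin n) (Fin m) (FF K))
    (y : ℕ → Fin n → Polynomial K) : Prop :=
  pnorm (y 1) = 1 ∧
  (∀ k, 1 ≤ k → pnorm (y k) < pnorm (y (k + 1))) ∧
  (∀ k, 1 ≤ k → Mfun A (y (k + 1)) < Mfun A (y k)) ∧
  (∀ k, 1 ≤ k → ∀ x : Fin n → Polynomial K, x ≠ 0 → pnorm x < pnorm (y (k + 1)) →
    Mfun A (y k) ≤ Mfun A x)

end Exponents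

section Scalar

/-- The system `⟨ξ x - θ⟩ ≤ H^{-ω}`, `‖x‖ ≤ H` has a polynomial solution `x`. -/
def sSolv (ξ θ : FF K) (ω H : ℝ) : Prop :=
  ∃ x : Polynomial K, sdist (ξ * polyF x - θ) ≤ H ^ (-ω) ∧ fnorm (polyF x) ≤ H

/-- The scalar inhomogeneous exponent `ω((ξ), θ)`. -/
def somegaInhom (ξ θ : FF K) : ℝ≥0∞ :=
  ⨆ (ω : ℝ) (_ : ∀ H₀ : ℝ, ∃ H : ℝ, H₀ ≤ H ∧ sSolv ξ θ ω H), ENNReal.ofReal ω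

/-- The scalar uniform inhomogeneous exponent `ω̂((ξ), θ)`. -/
def somegaHatInhom (ξ θ : FF K) : ℝ≥0∞ :=
  ⨆ (ω : ℝ) (_ : ∃ H₀ : ℝ, ∀ H : ℝ, H₀ ≤ H → sSolv ξ θ ω H), ENNReal.ofReal ω

/-- The scalar homogeneous exponent `ω((ξ))`. -/
def somegaHom (ξ : FF K) : ℝ≥0∞ :=
  ⨆ (ω : ℝ) (_ : ∀ H₀ : ℝ, ∃ H : ℝ, H₀ ≤ H ∧ ∃ x : Polynomial K, x ≠ 0 ∧
      sdist (ξ * polyF x) ≤ H ^ (-ω) ∧ fnorm (polyF x) ≤ H), ENNReal.ofReal ω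

/-- `liminf_{x ∈ 𝔽_q[z], ‖x‖ → ∞} ‖x‖ ⟨α x - θ⟩`, computed in `[0, ∞]`. -/
def sBadLiminf (α θ : FF K) : ℝ≥0∞ :=
  Filter.liminf
    (fun x : Polynomial K => ENNReal.ofReal (fnorm (polyF x) * sdist (α * polyF x - θ)))
    (Filter.comap (fun x : Polynomial K => fnorm (polyF x)) Filter.atTop)

/-- The set `Bad^ε(α)` of `θ ∈ 𝕀` with `liminf_{‖x‖ → ∞} ‖x‖ ⟨α x - θ⟩ ≥ ε`. -/
def sBad (α : FF K) (ε : ℝ) : Set (FF K) :=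
  {θ | fnorm θ < 1 ∧ ENNReal.ofReal ε ≤ sBadLiminf α θ}

end Scalar

section CF

/-- The Gauss map `T x = 1/x - [1/x]` on `𝔽_q((z⁻¹))`. -/
def gaussMap (x : FF K) : FF K := fracPart x⁻¹

/-- `pquot α k` is the `(k+1)`-st partial quotient `A_{k+1} = [1 / T^k α]` of the
continued fraction expansion of `α`. -/
def pquot (α : FF K) (k : ℕ) : Polynomial K := intPoly ((gaussMap^[k] α)⁻¹)

/-- `cfQ α k` is the denominator `Q_k` of the `k`-th convergent of the continued fraction
expansion of `α`: `Q_0 = 1`, `Q_1 = A_1`, `Q_{k+2} = A_{k+2} Q_{k+1} + Q_k`. -/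
def cfQ (α : FF K) : ℕ → Polynomial K
  | 0 => 1
  | 1 => pquot α 0
  | (k + 2) => pquot α (k + 1) * cfQ α (k + 1) + cfQ α k

/-- `α` is singular on average: for every `c > 0` the proportion of `l ∈ {1, …, N}` for
which `‖{Q α}‖ ≤ c 2^{-l}` has a solution `Q ∈ 𝔽_q[z]` with `0 < ‖Q‖ ≤ 2^l` tends to `1`
as `N → ∞`. -/
def SingularOnAverage (α : FF K) : Prop :=
  ∀ c : ℝ, 0 < c →
    Filter.Tendsto
      (fun N : ℕ =>
        (((Finset.Icc 1 N).filter (fun l : ℕ =>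
            ∃ Q : Polynomial K, Q ≠ 0 ∧ fnorm (polyF Q) ≤ 2 ^ l ∧
              fnorm (fracPart (polyF Q * α)) ≤ c / 2 ^ l)).card : ℝ) / (N : ℝ))
      Filter.atTop (nhds 1)

end CF

end FPSDA

open FPSDA MeasureTheory

/-!
Only coefficients matter. The vector `x` ranges over polynomial vectors of degree `< t`, given by
finitely many coefficients in `𝔽_q`, and `⟨L_i(x) - θ_i⟩ < q⁻ˢ` says that the coefficients of
`z⁻¹, …, z⁻ˢ` in `L_i(x)` and in `θ_i` agree. This is a finite linear system over `𝔽_q` whose matrix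
has Hankel blocks: the entry at `((i, k), (j, a))` is the coefficient of `z⁻⁽ᵏ⁺ᵃ⁺¹⁾` in `α_{ij}`.
Since `k + a` is symmetric, its transpose is the matrix of the same system for `Aᵀ` with `s` and `t`
exchanged. The system is solvable for every `θ` iff the rows of the matrix are independent, that is
iff the transposed homogeneous system has no nonzero solution `y`.
-/

namespace FPSDA

open Polynomial
open scoped Matrix

lemma mulVec_surjective_iff_transpose_mulVec_injective {F ι κ : Type*} [Field F] [Fintype ι]
    [Fintype κ] (M : Matrix ι κ F) :
    Function.Surjective M.mulVec ↔ Function.Injective Mᵀ.mulVec := by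
  have surjective_iff_rank : Function.Surjective M.mulVec ↔ M.rank = Fintype.card ι := by
    rw [← Matrix.coe_mulVecLin, ← LinearMap.range_eq_top, Submodule.eq_top_iff_finrank_eq,
      Module.finrank_fintype_fun_eq_card, Matrix.rank]
  rw [surjective_iff_rank, Matrix.mulVec_injective_iff, Matrix.col_transpose,
    linearIndependent_iff_card_eq_finrank_span, Set.finrank, ← Matrix.rank_eq_finrank_span_row,
    eq_comm]

section Coefficients

variable {K : Type*} [Field K]

/-- The coefficient of `z⁻ˡ` as an additive map on `𝔽_q((z⁻¹))`; note the sign of the exponent. -/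
def digit (l : ℤ) : FF K →+ K :=
  HahnSeries.coeff.addMonoidHom l

lemma polyF_add (P Q : K[X]) : polyF (P + Q) = polyF P + polyF Q :=
  map_add (aeval (HahnSeries.single (-1 : ℤ) (1 : K))) P Q

lemma toL_polyF_monomial (a : ℕ) (c : K) :
    toL (polyF (monomial a c)) = HahnSeries.single (-(a : ℤ)) c := by
  change aeval (HahnSeries.single (-1 : ℤ) (1 : K)) (monomial a c) = _
  rw [aeval_monomial, HahnSeries.single_pow, HahnSeries.algebraMap_apply',
    PowerSeries.algebraMap_apply, HahnSeries.ofPowerSeries_C, HahnSeries.C_apply,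
    HahnSeries.single_mul_single]
  simp

lemma digit_mul_polyF (l : ℤ) (x : FF K) (P : K[X]) :
    digit l (x * polyF P) = P.sum fun a c => digit (l + a) x * c := by
  induction P using Polynomial.induction_on' with
  | add P Q hP hQ =>
    rw [polyF_add, mul_add, map_add, hP, hQ]
    exact (sum_add_index _ _ _ (fun _ => mul_zero _) fun _ _ _ => mul_add _ _ _).symm
  | monomial a c =>
    rw [sum_monomial_index c (fun a c => digit (l + a) x * c) (mul_zero _)]
    change (toL x * toL (polyF (monomial a c))).coeff l = (toL x).coeff (l + a) * c
    rw [toL_polyF_monomial, HahnSeries.coeff_mul_single, sub_neg_eq_add]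

lemma digit_polyF (l : ℤ) (P : K[X]) :
    digit l (polyF P) = if l ≤ 0 then P.coeff (-l).toNat else 0 := by
  induction P using Polynomial.induction_on' with
  | add P Q hP hQ => rw [polyF_add, map_add, hP, hQ, coeff_add, ← ite_add_zero]
  | monomial a c =>
    change (toL (polyF (monomial a c))).coeff l = _
    rw [toL_polyF_monomial, HahnSeries.coeff_single, coeff_monomial]
    grind

lemma coeff_intPoly (x : FF K) (a : ℕ) : (intPoly x).coeff a = digit (-(a : ℤ)) x := by
  simp only [intPoly, finsetSum_coeff, coeff_monomial, Finset.sum_ite_eq', Finset.mem_range]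
  split_ifs with ha
  · rfl
  · have lt_order : -(a : ℤ) < (toL x).order := by omega
    exact (HahnSeries.coeff_eq_zero_of_lt_order lt_order).symm

end Coefficients

section HankelSystem

variable {K ι κ : Type*} [Field K]

/-- The coefficients of `z⁻¹, …, z⁻ᴺ` in each entry of `v`; the index `(i, k)`, where `0 ≤ k < N`,
stands for the coefficient of `z⁻⁽ᵏ⁺¹⁾` in `v i`. -/
def fracDigits (N : ℕ) (v : ι → FF K) : ι × Fin N → K :=
  fun p => digit (p.2 + 1) (v p.1)

/-- The coefficients of `1, z, …, zᵗ⁻¹` in each entry of the polynomial vector `x`. -/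
def polyDigits (t : ℕ) (x : κ → K[X]) : κ × Fin t → K :=
  fun r => (x r.1).coeff r.2

/-- The matrix, with Hankel blocks, of the linear map that sends the coefficients of a polynomial
vector `x` of degree `< t` to the coefficients of `z⁻¹, …, z⁻ˢ` in `A x`. -/
def coeffHankel (A : Matrix ι κ (FF K)) (s t : ℕ) : Matrix (ι × Fin s) (κ × Fin t) K :=
  Matrix.of fun p r => digit (p.2 + 1 + r.2) (A p.1 r.1)

lemma coeffHankel_transpose (A : Matrix ι κ (FF K)) (s t : ℕ) :
    (coeffHankel A s t)ᵀ = coeffHankel Aᵀ t s := by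
  ext r p
  simp only [coeffHankel, Matrix.transpose_apply, Matrix.of_apply]
  rw [add_right_comm, add_comm (p.2 : ℤ), add_right_comm]

lemma coeffHankel_mulVec_polyDigits [Fintype κ] (A : Matrix ι κ (FF K)) (s : ℕ) {t : ℕ}
    {x : κ → K[X]} (hx : ∀ j, (x j).degree < t) :
    coeffHankel A s t *ᵥ polyDigits t x = fracDigits s (A *ᵥ fun j => polyF (x j)) := by
  ext ⟨i, k⟩
  calc (coeffHankel A s t *ᵥ polyDigits t x) (i, k)
      = ∑ j, ∑ a : Fin t, digit (k + 1 + a) (A i j) * (x j).coeff a := Fintype.sum_prod_type _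
    _ = ∑ j, digit (k + 1) (A i j * polyF (x j)) := by
        refine Finset.sum_congr rfl fun j _ => ?_
        rw [digit_mul_polyF, ← sum_fin _ (fun _ => mul_zero _) (hx j)]
    _ = fracDigits s (A *ᵥ fun j => polyF (x j)) (i, k) := (map_sum _ _ _).symm

lemma fracDigits_sub (N : ℕ) (v w : ι → FF K) :
    fracDigits N (v - w) = fracDigits N v - fracDigits N w :=
  funext fun _ => map_sub _ _ _

lemma fracDigits_surjective (N : ℕ) :
    Function.Surjective (fracDigits N : (ι → FF K) → ι × Fin N → K) := by
  intro c
  let v : ι → LaurentSeries K := fun i => ∑ k : Fin N, HahnSeries.single ((k : ℤ) + 1) (c (i, k))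
  refine ⟨v, funext fun ⟨i, k⟩ => ?_⟩
  change (v i).coeff (k + 1) = c (i, k)
  simp [v, HahnSeries.coeff_single, Fin.val_inj]

lemma exists_polyDigits_eq {t : ℕ} (c : κ × Fin t → K) :
    ∃ x : κ → K[X], (∀ j, (x j).degree < t) ∧ polyDigits t x = c := by
  let P (j : κ) := (degreeLTEquiv K t).symm fun a => c (j, a)
  refine ⟨fun j => P j, fun j => mem_degreeLT.1 (P j).2, funext fun ⟨j, a⟩ => ?_⟩
  exact congrFun ((degreeLTEquiv K t).apply_symm_apply fun a => c (j, a)) a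

lemma polyDigits_eq_zero_iff {x : κ → K[X]} {t : ℕ} (hx : ∀ j, (x j).degree < t) :
    polyDigits t x = 0 ↔ x = 0 := by
  refine ⟨fun h => funext fun j => Polynomial.ext fun a => ?_, ?_⟩
  · rcases lt_or_ge a t with ha | ha
    · exact congrFun h (j, ⟨a, ha⟩)
    · exact (degree_lt_iff_coeff_zero _ _).1 (hx j) a ha
  · rintro rfl
    rfl

end HankelSystem

section Norms

variable {K ι : Type*} [Field K] [Fintype K]

lemma fnorm_lt_zpow_iff {x : FF K} {N : ℤ} :
    fnorm x < (Fintype.card K : ℝ) ^ (-N) ↔ ∀ l ≤ N, digit l x = 0 := by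
  change _ ↔ ∀ l ≤ N, (toL x).coeff l = 0
  unfold fnorm
  split_ifs with hx
  · simp only [hx, HahnSeries.coeff_zero, implies_true, iff_true]
    positivity
  · have one_lt_card : (1 : ℝ) < Fintype.card K := by exact_mod_cast Fintype.one_lt_card
    rw [zpow_lt_zpow_iff_right₀ one_lt_card, neg_lt_neg_iff, ← Int.add_one_le_iff,
      HahnSeries.le_order_iff_forall hx]
    simp only [Int.lt_add_one_iff]

lemma fnorm_polyF_lt_zpow_iff {P : K[X]} {t : ℕ} :
    fnorm (polyF P) < (Fintype.card K : ℝ) ^ (t : ℤ) ↔ P.degree < t := by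
  rw [← neg_neg (t : ℤ), fnorm_lt_zpow_iff, degree_lt_iff_coeff_zero]
  simp only [digit_polyF]
  refine ⟨fun h a ha => ?_, fun h l hl => ?_⟩
  · simpa using h (-a) (by omega)
  · rw [if_pos (by omega), h _ (by omega)]

lemma sdist_lt_iff {x : FF K} {r : ℝ} : sdist x < r ↔ ∃ P : K[X], fnorm (x - polyF P) < r :=
  ⟨exists_lt_of_ciInf_lt, fun ⟨P, hP⟩ =>
    (ciInf_le ⟨0, Set.forall_mem_range.2 fun _ => fnorm_nonneg _⟩ P).trans_lt hP⟩

lemma sdist_lt_zpow_iff {x : FF K} {N : ℕ} :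
    sdist x < (Fintype.card K : ℝ) ^ (-(N : ℤ)) ↔ ∀ k : Fin N, digit (k + 1) x = 0 := by
  simp only [sdist_lt_iff, fnorm_lt_zpow_iff, map_sub, digit_polyF]
  refine ⟨fun ⟨P, hP⟩ k => ?_, fun h => ⟨intPoly x, fun l hl => ?_⟩⟩
  · simpa [show ¬((k : ℤ) + 1 ≤ 0) by omega] using hP (k + 1) (by omega)
  · split_ifs with hl0
    · rw [coeff_intPoly, Int.toNat_of_nonneg (by omega), neg_neg, sub_self]
    · obtain ⟨k, rfl⟩ : ∃ k : ℕ, l = k + 1 := ⟨(l - 1).toNat, by omega⟩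
      rw [sub_zero]
      exact h ⟨k, by omega⟩

lemma forall_sdist_lt_zpow_iff {v : ι → FF K} {N : ℕ} :
    (∀ i, sdist (v i) < (Fintype.card K : ℝ) ^ (-(N : ℤ))) ↔ fracDigits N v = 0 := by
  simp only [sdist_lt_zpow_iff, funext_iff, Prod.forall, fracDigits, Pi.zero_apply]

variable [Fintype ι]

lemma vnorm_lt_iff {v : ι → FF K} {r : ℝ} (hr : 0 < r) : vnorm v < r ↔ ∀ i, fnorm (v i) < r := by
  cases isEmpty_or_nonempty ι
  · simpa [vnorm] using hr
  · refine ⟨fun h i => (le_ciSup (Set.finite_range _).bddAbove i).trans_lt h, fun h => ?_⟩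
    obtain ⟨i, hi⟩ := exists_eq_ciSup_of_finite (f := fun i => fnorm (v i))
    exact hi.symm.trans_lt (h i)

lemma vdist_lt_iff {v : ι → FF K} {r : ℝ} (hr : 0 < r) : vdist v < r ↔ ∀ i, sdist (v i) < r := by
  have vnorm_nonneg (w : ι → FF K) : 0 ≤ vnorm w := Real.iSup_nonneg fun _ => fnorm_nonneg _
  have vdist_lt_iff_exists : vdist v < r ↔ ∃ y : ι → K[X], vnorm (fun i => v i - polyF (y i)) < r :=
    ⟨exists_lt_of_ciInf_lt, fun ⟨y, hy⟩ =>
      (ciInf_le ⟨0, Set.forall_mem_range.2 fun _ => vnorm_nonneg _⟩ y).trans_lt hy⟩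
  simp only [vdist_lt_iff_exists, vnorm_lt_iff hr, sdist_lt_iff, Classical.skolem]

lemma vdist_lt_zpow_iff {v : ι → FF K} {N : ℕ} :
    vdist v < (Fintype.card K : ℝ) ^ (-(N : ℤ)) ↔ fracDigits N v = 0 := by
  rw [vdist_lt_iff (by positivity), forall_sdist_lt_zpow_iff]

lemma pnorm_lt_zpow_iff {x : ι → K[X]} {t : ℕ} :
    pnorm x < (Fintype.card K : ℝ) ^ (t : ℤ) ↔ ∀ j, (x j).degree < t := by
  rw [pnorm, vnorm_lt_iff (by positivity)]
  simp only [fnorm_polyF_lt_zpow_iff]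

end Norms

section Transference

variable {K ι κ : Type*} [Field K] [Fintype K] [Fintype κ]

lemma coeffHankel_mulVec_surjective_iff (A : Matrix ι κ (FF K)) (s t : ℕ) :
    Function.Surjective (coeffHankel A s t).mulVec ↔
      ∀ θ : ι → FF K, ∃ x : κ → K[X], pnorm x < (Fintype.card K : ℝ) ^ (t : ℤ) ∧
        ∀ i, sdist ((A *ᵥ fun j => polyF (x j)) i - θ i) < (Fintype.card K : ℝ) ^ (-(s : ℤ)) := by
  have approx_iff {x : κ → K[X]} (hx : ∀ j, (x j).degree < t) (θ : ι → FF K) :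
      (∀ i, sdist ((A *ᵥ fun j => polyF (x j)) i - θ i) < (Fintype.card K : ℝ) ^ (-(s : ℤ))) ↔
        coeffHankel A s t *ᵥ polyDigits t x = fracDigits s θ := by
    rw [coeffHankel_mulVec_polyDigits A s hx, ← sub_eq_zero, ← fracDigits_sub]
    exact forall_sdist_lt_zpow_iff
  rw [Function.Surjective, (fracDigits_surjective s).forall]
  simp only [pnorm_lt_zpow_iff]
  refine forall_congr' fun θ => ⟨fun ⟨c, hc⟩ => ?_, fun ⟨x, hx, hxθ⟩ => ?_⟩
  · obtain ⟨x, hx, rfl⟩ := exists_polyDigits_eq c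
    exact ⟨x, hx, (approx_iff hx θ).2 hc⟩
  · exact ⟨polyDigits t x, (approx_iff hx θ).1 hxθ⟩

lemma coeffHankel_mulVec_injective_iff [Fintype ι] (A : Matrix ι κ (FF K)) (s t : ℕ) :
    Function.Injective (coeffHankel A s t).mulVec ↔
      ∀ x : κ → K[X], x ≠ 0 → pnorm x < (Fintype.card K : ℝ) ^ (t : ℤ) →
        (Fintype.card K : ℝ) ^ (-(s : ℤ)) ≤ vdist (A *ᵥ fun j => polyF (x j)) := by
  simp only [pnorm_lt_zpow_iff, ← not_lt, vdist_lt_zpow_iff]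
  rw [← Matrix.coe_mulVecLin, injective_iff_map_eq_zero]
  refine ⟨fun h x hx0 hx hAx => hx0 ?_, fun h c hc => ?_⟩
  · rw [← coeffHankel_mulVec_polyDigits A s hx] at hAx
    exact (polyDigits_eq_zero_iff hx).1 (h _ hAx)
  · obtain ⟨x, hx, rfl⟩ := exists_polyDigits_eq c
    rw [Matrix.mulVecLin_apply, coeffHankel_mulVec_polyDigits A s hx] at hc
    by_contra hx0
    exact h x (mt (polyDigits_eq_zero_iff hx).2 hx0) hx hc

end Transference

end FPSDA

theorem transference_lemma_general {K ι κ : Type*} [Field K] [Fintype K] [Fintype ι] [Fintype κ]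
    (A : Matrix ι κ (FF K)) (s t : ℕ) :
    (∀ y : ι → Polynomial K, y ≠ 0 → pnorm y < (Fintype.card K : ℝ) ^ (s : ℤ) →
      (Fintype.card K : ℝ) ^ (-(t : ℤ)) ≤ vdist (A.transpose.mulVec fun i => polyF (y i))) ↔
    ∀ θ : ι → FF K, ∃ x : κ → Polynomial K, pnorm x < (Fintype.card K : ℝ) ^ (t : ℤ) ∧
      ∀ i, sdist (A.mulVec (fun j => polyF (x j)) i - θ i) <
        (Fintype.card K : ℝ) ^ (-(s : ℤ)) := by
  rw [← coeffHankel_mulVec_injective_iff, ← coeffHankel_mulVec_surjective_iff,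
    ← coeffHankel_transpose, mulVec_surjective_iff_transpose_mulVec_injective]

/-- Transference lemma (Lemma 4.3 of the paper): if `M(y) = ⟨Aᵀ y⟩ ≥ q^{-t}` for every
nonzero polynomial vector `y` with `‖y‖ ≤ q^s`, then for every `θ ∈ 𝔽_q((z⁻¹))ⁿ` there
is a polynomial vector `x` with `‖x‖ ≤ q^t` and `max_i ⟨L_i(x) - θ_i⟩ ≤ q^{-s}`. -/
theorem transference_lemma {K : Type*} [Field K] [Fintype K] {m n : ℕ}
    (hm : 0 < m) (hn : 0 < n)
    (A : Matrix (Fin n) (Fin m) (FF K)) (s t : ℕ) (hs : 0 < s) (ht : 0 < t)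
    (h : ∀ y : Fin n → Polynomial K, y ≠ 0 → pnorm y ≤ (Fintype.card K : ℝ) ^ (s : ℤ) →
      (Fintype.card K : ℝ) ^ (-(t : ℤ)) ≤ Mfun A y) :
    ∀ θ : Fin n → FF K, ∃ x : Fin m → Polynomial K,
      pnorm x ≤ (Fintype.card K : ℝ) ^ (t : ℤ) ∧
      (⨆ i, sdist (A.mulVec (fun j => polyF (x j)) i - θ i)) ≤
        (Fintype.card K : ℝ) ^ (-(s : ℤ)) := by
  intro θ
  obtain ⟨x, hx, hxθ⟩ :=
    (transference_lemma_general A s t).1 (fun y hy hys => h y hy hys.le) θ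
  exact ⟨x, hx.le, Real.iSup_le (fun i => (hxθ i).le) (by positivity)⟩
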